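/- Let n ≥ 2, R > 0, and let B_R(0) be the open ball of radius R centered at the origin in ℝⁿ. If u is a nonzero function, smooth on the closure of B_R(0), satisfying Δu = −μ₁(B_R(0))·u in B_R(0) and ∂u/∂n = 0 on ∂B_R(0) (i.e., u is a first nonzero Neumann eigenfunction of the Laplacian on the ball), then u satisfies Δ²u = Υ₁(B_R(0))·u in B_R(0) together with ∂u/∂n = ∂(Δu)/∂n = 0 on ∂B_R(0); that is, u is a Neumann eigenfunction of the bi-harmonic operator Δ² corresponding to its first nonzero Neumann eigenvalue Υ₁(B_R(0)). -/

import Mathlib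

open MeasureTheory Set Metric

noncomputable section

/-- The Laplacian of `f` (sum of second partial derivatives), with all derivatives
taken within the set `S`. -/
def lapWithin {n : ℕ} (S : Set (EuclideanSpace ℝ (Fin n)))
    (f : EuclideanSpace ℝ (Fin n) → ℝ) (x : EuclideanSpace ℝ (Fin n)) : ℝ :=
  ∑ i : Fin n, fderivWithin ℝ
    (fun y => fderivWithin ℝ f S y (EuclideanSpace.single i 1)) S x (EuclideanSpace.single i 1)

/-- `μ` is a Neumann eigenvalue of the Laplacian on the ball `B_R(0) ⊂ ℝⁿ`: there is a nonzero
function `u`, smooth on the closed ball, with `Δu = −μ·u` in the open ball and vanishing outward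
normal (i.e. radial) derivative on the boundary sphere. -/
def IsLapNeumannEigenvalueBall (n : ℕ) (R μ : ℝ) : Prop :=
  ∃ u : EuclideanSpace ℝ (Fin n) → ℝ,
    ContDiffOn ℝ (⊤ : ℕ∞) u (closedBall 0 R) ∧
    (∃ x ∈ closedBall (0 : EuclideanSpace ℝ (Fin n)) R, u x ≠ 0) ∧
    (∀ x ∈ ball (0 : EuclideanSpace ℝ (Fin n)) R,
      lapWithin (closedBall 0 R) u x = -μ * u x) ∧
    (∀ x : EuclideanSpace ℝ (Fin n), ‖x‖ = R →
      fderivWithin ℝ u (closedBall 0 R) x (‖x‖⁻¹ • x) = 0)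

/-- `Υ` is a Neumann eigenvalue of the bi-harmonic operator `Δ²` on the ball `B_R(0) ⊂ ℝⁿ`:
there is a nonzero function `u`, smooth on the closed ball, with `Δ²u = Υ·u` in the open ball and
`∂u/∂n = ∂(Δu)/∂n = 0` on the boundary sphere. -/
def IsBiLapNeumannEigenvalueBall (n : ℕ) (R Υ : ℝ) : Prop :=
  ∃ u : EuclideanSpace ℝ (Fin n) → ℝ,
    ContDiffOn ℝ (⊤ : ℕ∞) u (closedBall 0 R) ∧
    (∃ x ∈ closedBall (0 : EuclideanSpace ℝ (Fin n)) R, u x ≠ 0) ∧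
    (∀ x ∈ ball (0 : EuclideanSpace ℝ (Fin n)) R,
      lapWithin (closedBall 0 R) (lapWithin (closedBall 0 R) u) x = Υ * u x) ∧
    (∀ x : EuclideanSpace ℝ (Fin n), ‖x‖ = R →
      fderivWithin ℝ u (closedBall 0 R) x (‖x‖⁻¹ • x) = 0) ∧
    (∀ x : EuclideanSpace ℝ (Fin n), ‖x‖ = R →
      fderivWithin ℝ (lapWithin (closedBall 0 R) u) (closedBall 0 R) x (‖x‖⁻¹ • x) = 0)

/-- `Υ` is a Neumann eigenvalue of the even-multi-Laplacian `Δ^(2m)` on the ball `B_R(0) ⊂ ℝⁿ`: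
there is a nonzero function `u`, smooth on the closed ball, with `Δ^(2m)u = Υ·u` in the open ball
and `∂(Δʲu)/∂n = 0` on the boundary sphere for every `j = 0, 1, …, 2m−1`. -/
def IsPolyLapNeumannEigenvalueBall (n m : ℕ) (R Υ : ℝ) : Prop :=
  ∃ u : EuclideanSpace ℝ (Fin n) → ℝ,
    ContDiffOn ℝ (⊤ : ℕ∞) u (closedBall 0 R) ∧
    (∃ x ∈ closedBall (0 : EuclideanSpace ℝ (Fin n)) R, u x ≠ 0) ∧
    (∀ x ∈ ball (0 : EuclideanSpace ℝ (Fin n)) R,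
      (lapWithin (closedBall 0 R))^[2 * m] u x = Υ * u x) ∧
    (∀ j < 2 * m, ∀ x : EuclideanSpace ℝ (Fin n), ‖x‖ = R →
      fderivWithin ℝ ((lapWithin (closedBall 0 R))^[j] u) (closedBall 0 R) x (‖x‖⁻¹ • x) = 0)

/-!
Since `Δ² - s² = (Δ - s)(Δ + s)`, a biharmonic Neumann eigenfunction `v` with eigenvalue `s² > 0`
yields `w = Δv + s v` with `Δw = s w` and `∂w/∂n = 0`. Such a `w` vanishes by a maximum principle:
at a maximum point of a function with vanishing normal derivative the whole gradient vanishes, even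
on the sphere, so the second derivative is nonpositive in every direction pointing into the ball.
A quadratic form does not distinguish `d` from `-d`, hence it is nonpositive in all directions and
`s w = Δw ≤ 0` there; the same holds for `-w`. Consequently `Δv = -s v`, and the
positive biharmonic Neumann eigenvalues are exactly the squares of the positive Neumann eigenvalues
of the Laplacian.
-/

open scoped Topology RealInnerProductSpace

section SecondOrderCondition

lemma second_deriv_nonpos_of_isMaxOn_Icc {g g' : ℝ → ℝ} {a b d : ℝ} (hab : a < b)
    (hg : ∀ t ∈ Icc a b, HasDerivWithinAt g (g' t) (Icc a b) t)
    (hg' : HasDerivWithinAt g' d (Icc a b) a) (hcrit : g' a = 0)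
    (hmax : IsMaxOn g (Icc a b) a) : d ≤ 0 := by
  by_contra! hd
  have hslope : ∀ᶠ t in 𝓝[>] a, 0 < slope g' a t := by
    have h := (hasDerivWithinAt_iff_tendsto_slope' (by simp)).1 (hg'.mono Ioc_subset_Icc_self)
    rw [nhdsWithin_Ioc_eq_nhdsGT hab] at h
    exact h.eventually (lt_mem_nhds hd)
  obtain ⟨c, hac, hc⟩ := mem_nhdsGT_iff_exists_Ioc_subset.1 hslope
  have hm : a < min b c := lt_min hab hac
  have hsub : Icc a (min b c) ⊆ Icc a b := Icc_subset_Icc_right (min_le_left b c)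
  have hmono : StrictMonoOn g (Icc a (min b c)) := by
    refine strictMonoOn_of_hasDerivWithinAt_pos (convex_Icc _ _)
      (fun t ht => (hg t (hsub ht)).continuousWithinAt.mono hsub)
      (fun t ht => (hg t (hsub (interior_subset ht))).mono (interior_subset.trans hsub))
      fun t ht => ?_
    rw [interior_Icc] at ht
    have hpos : 0 < slope g' a t := hc ⟨ht.1, ht.2.le.trans (min_le_right b c)⟩
    rw [slope_def_field, hcrit, sub_zero] at hpos
    exact (div_pos_iff_of_pos_right (sub_pos.2 ht.1)).1 hpos
  exact (hmono (left_mem_Icc.2 hm.le) (right_mem_Icc.2 hm.le) hm).not_ge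
    (hmax (hsub (right_mem_Icc.2 hm.le)))

variable {E : Type*} [NormedAddCommGroup E] [NormedSpace ℝ E]
  {S : Set E} {f : E → ℝ} {f' : E → E →L[ℝ] ℝ} {f'' : E →L[ℝ] E →L[ℝ] ℝ} {x : E}

lemma second_fderiv_sub_apply_nonpos_of_isMaxOn (hS : Convex ℝ S)
    (hf : ∀ y ∈ S, HasFDerivWithinAt f (f' y) S y) (hf' : HasFDerivWithinAt f' f'' S x)
    (hcrit : f' x = 0) (hmax : IsMaxOn f S x) (hx : x ∈ S) {y : E} (hy : y ∈ S) :
    f'' (y - x) (y - x) ≤ 0 := by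
  set ℓ : ℝ → E := ⇑(AffineMap.lineMap (k := ℝ) x y)
  have hℓ_mem : MapsTo ℓ (Icc 0 1) S := fun t ht => hS.lineMap_mem hx hy ht
  have hℓ_zero : ℓ 0 = x := AffineMap.lineMap_apply_zero x y
  have hℓ (t : ℝ) : HasDerivWithinAt ℓ (y - x) (Icc 0 1) t :=
    AffineMap.hasDerivWithinAt_lineMap
  refine second_deriv_nonpos_of_isMaxOn_Icc (g := f ∘ ℓ) (g' := fun t => f' (ℓ t) (y - x))
    zero_lt_one (fun t ht => (hf _ (hℓ_mem ht)).comp_hasDerivWithinAt t (hℓ t) hℓ_mem) ?_ ?_ ?_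
  · rw [← hℓ_zero] at hf'
    simpa using (hf'.comp_hasDerivWithinAt 0 (hℓ 0) hℓ_mem).clm_apply
      (hasDerivWithinAt_const (0 : ℝ) (Icc 0 1) (y - x))
  · simp [hℓ_zero, hcrit]
  · intro t ht
    simpa [hℓ_zero] using hmax (hℓ_mem ht)

lemma second_fderiv_apply_nonpos_of_isMaxOn (hS : Convex ℝ S)
    (hf : ∀ y ∈ S, HasFDerivWithinAt f (f' y) S y) (hf' : HasFDerivWithinAt f' f'' S x)
    (hcrit : f' x = 0) (hmax : IsMaxOn f S x) (hx : x ∈ S) {v : E}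
    (hv : v ∈ posTangentConeAt S x) : f'' v v ≤ 0 := by
  obtain ⟨ι, l, _, c, d, -, hdS, hcd⟩ := exists_fun_of_mem_tangentConeAt hv
  have hlim : Filter.Tendsto (fun i => f'' (c i • d i) (c i • d i)) l (𝓝 (f'' v v)) :=
    ((by fun_prop : Continuous fun w => f'' w w).tendsto v).comp hcd
  refine le_of_tendsto hlim (hdS.mono fun i hi => ?_)
  have hd : f'' (d i) (d i) ≤ 0 := by
    simpa using second_fderiv_sub_apply_nonpos_of_isMaxOn hS hf hf' hcrit hmax hx hi
  simp only [NNReal.smul_def, map_smul, smul_apply, smul_eq_mul]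
  exact mul_nonpos_of_nonneg_of_nonpos (c i).2 (mul_nonpos_of_nonneg_of_nonpos (c i).2 hd)

end SecondOrderCondition

section Ball

lemma uniqueDiffOn_closedBall {E : Type*} [NormedAddCommGroup E] [NormedSpace ℝ E] (x : E)
    {R : ℝ} (hR : 0 < R) : UniqueDiffOn ℝ (closedBall x R) :=
  uniqueDiffOn_convex (convex_closedBall x R)
    ((nonempty_ball.2 hR).mono ball_subset_interior_closedBall)

lemma eqOn_closedBall_of_eqOn_ball {E F : Type*} [NormedAddCommGroup E] [NormedSpace ℝ E]
    [TopologicalSpace F] [T2Space F] {f g : E → F} {x : E} {R : ℝ} (hR : R ≠ 0)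
    (hf : ContinuousOn f (closedBall x R)) (hg : ContinuousOn g (closedBall x R))
    (h : EqOn f g (ball x R)) : EqOn f g (closedBall x R) :=
  h.of_subset_closure hf hg ball_subset_closedBall (closure_ball x hR).ge

variable {E : Type*} [NormedAddCommGroup E] [InnerProductSpace ℝ E] {R : ℝ} {x : E}

lemma mem_posTangentConeAt_closedBall_of_inner_neg {v : E} (hv : ⟪x, v⟫ < 0) :
    v ∈ posTangentConeAt (closedBall 0 ‖x‖) x := by
  refine mem_posTangentConeAt_of_frequently_mem (Filter.Eventually.frequently ?_)
  have hlim : ∀ᶠ t : ℝ in 𝓝[>] 0, 2 * ⟪x, v⟫ + t * ‖v‖ ^ 2 < 0 := by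
    have hcont : Continuous fun t : ℝ => 2 * ⟪x, v⟫ + t * ‖v‖ ^ 2 := by fun_prop
    exact nhdsWithin_le_nhds
      (hcont.continuousAt.eventually_lt_const (by simpa using mul_neg_of_pos_of_neg two_pos hv))
  filter_upwards [hlim, self_mem_nhdsWithin] with t ht (ht_pos : 0 < t)
  rw [mem_closedBall_zero_iff, ← sq_le_sq₀ (norm_nonneg _) (norm_nonneg _)]
  calc ‖x + t • v‖ ^ 2 = ‖x‖ ^ 2 + t * (2 * ⟪x, v⟫ + t * ‖v‖ ^ 2) := by
        rw [norm_add_sq_real, norm_smul, inner_smul_right, mul_pow, Real.norm_eq_abs, sq_abs]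
        ring
    _ ≤ ‖x‖ ^ 2 := by linarith [mul_neg_of_pos_of_neg ht_pos ht]

lemma mem_posTangentConeAt_closedBall_of_inner_nonpos (hR : 0 < R) (hx : x ∈ closedBall 0 R)
    {v : E} (hv : ⟪x, v⟫ ≤ 0) : v ∈ posTangentConeAt (closedBall 0 R) x := by
  rcases (mem_closedBall_zero_iff.1 hx).lt_or_eq with hlt | rfl
  · rw [posTangentConeAt, tangentConeAt_of_mem_nhds (closedBall_mem_nhds_of_mem
      (mem_ball_zero_iff.2 hlt))]
    exact mem_univ v
  have hclosed : IsClosed (posTangentConeAt (closedBall 0 ‖x‖) x) := by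
    rw [posTangentConeAt, tangentConeAt_eq_biInter_closure]
    exact isClosed_biInter fun _ _ => isClosed_closure
  have hlim : Filter.Tendsto (fun c : ℝ => v - c • x) (𝓝[>] 0) (𝓝 v) := by
    have hcont : Continuous fun c : ℝ => v - c • x := by fun_prop
    simpa using (hcont.tendsto 0).mono_left nhdsWithin_le_nhds
  refine hclosed.mem_of_tendsto hlim ?_
  filter_upwards [self_mem_nhdsWithin] with c (hc : 0 < c)
  refine mem_posTangentConeAt_closedBall_of_inner_neg ?_
  rw [inner_sub_right, inner_smul_right, real_inner_self_eq_norm_sq]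
  linarith [mul_pos hc (pow_pos hR 2)]

lemma hasFDerivWithinAt_closedBall_eq_zero_of_isMaxOn {f : E → ℝ} {f' : E →L[ℝ] ℝ} (hR : 0 < R)
    (hx : x ∈ closedBall 0 R) (hf : HasFDerivWithinAt f f' (closedBall 0 R) x)
    (hradial : ‖x‖ = R → f' x = 0) (hmax : IsMaxOn f (closedBall 0 R) x) : f' = 0 := by
  rcases (mem_closedBall_zero_iff.1 hx).lt_or_eq with hlt | hxR
  · have hnhds : closedBall 0 R ∈ 𝓝 x := closedBall_mem_nhds_of_mem (mem_ball_zero_iff.2 hlt)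
    exact (hmax.isLocalMax hnhds).hasFDerivAt_eq_zero (hf.hasFDerivAt hnhds)
  have horth {v : E} (hv : ⟪x, v⟫ = 0) : f' v = 0 :=
    hmax.localize.hasFDerivWithinAt_eq_zero hf
      (mem_posTangentConeAt_closedBall_of_inner_nonpos hR hx hv.le)
      (mem_posTangentConeAt_closedBall_of_inner_nonpos hR hx (by simp [hv]))
  ext v
  have hproj : ⟪x, v - (⟪x, v⟫ / ‖x‖ ^ 2) • x⟫ = 0 := by
    rw [inner_sub_right, inner_smul_right, real_inner_self_eq_norm_sq,
      div_mul_cancel₀ _ (by rw [hxR]; positivity), sub_self]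
  simpa [hradial hxR] using horth hproj

lemma second_fderiv_closedBall_apply_nonpos_of_isMaxOn {f : E → ℝ} {f' : E → E →L[ℝ] ℝ}
    {f'' : E →L[ℝ] E →L[ℝ] ℝ} (hR : 0 < R) (hx : x ∈ closedBall 0 R)
    (hf : ∀ y ∈ closedBall 0 R, HasFDerivWithinAt f (f' y) (closedBall 0 R) y)
    (hf' : HasFDerivWithinAt f' f'' (closedBall 0 R) x)
    (hradial : ‖x‖ = R → f' x x = 0) (hmax : IsMaxOn f (closedBall 0 R) x) (v : E) :
    f'' v v ≤ 0 := by
  have hcrit := hasFDerivWithinAt_closedBall_eq_zero_of_isMaxOn hR hx (hf x hx) hradial hmax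
  have hcone {w : E} (hw : ⟪x, w⟫ ≤ 0) : f'' w w ≤ 0 :=
    second_fderiv_apply_nonpos_of_isMaxOn (convex_closedBall 0 R) hf hf' hcrit hmax hx
      (mem_posTangentConeAt_closedBall_of_inner_nonpos hR hx hw)
  rcases le_total ⟪x, v⟫ 0 with hv | hv
  · exact hcone hv
  · simpa using hcone (w := -v) (by simpa using hv)

end Ball

section Laplacian

variable {n : ℕ} {S : Set (EuclideanSpace ℝ (Fin n))} {f g : EuclideanSpace ℝ (Fin n) → ℝ}
  {x : EuclideanSpace ℝ (Fin n)}

lemma lapWithin_congr (h : EqOn f g S) : EqOn (lapWithin S f) (lapWithin S g) S := by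
  intro x hx
  refine Finset.sum_congr rfl fun i _ => ?_
  have hpartial : EqOn (fun y => fderivWithin ℝ f S y (EuclideanSpace.single i 1))
      (fun y => fderivWithin ℝ g S y (EuclideanSpace.single i 1)) S :=
    fun y hy => by simp only [fderivWithin_congr h (h hy)]
  rw [fderivWithin_congr hpartial (hpartial hx)]

lemma contDiffOn_lapWithin {m : WithTop ℕ∞} (hS : UniqueDiffOn ℝ S)
    (hf : ContDiffOn ℝ (m + 2) f S) : ContDiffOn ℝ m (lapWithin S f) S := by
  have hpartial {k : WithTop ℕ∞} {h : EuclideanSpace ℝ (Fin n) → ℝ}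
      (hh : ContDiffOn ℝ (k + 1) h S) (v : EuclideanSpace ℝ (Fin n)) :
      ContDiffOn ℝ k (fun y => fderivWithin ℝ h S y v) S :=
    (hh.fderivWithin hS le_rfl).clm_apply contDiffOn_const
  have hf' : ContDiffOn ℝ (m + 1 + 1) f S := by rwa [add_assoc, one_add_one_eq_two]
  exact ContDiffOn.sum fun i _ => hpartial (hpartial hf' _) _

lemma lapWithin_eq_sum_second_fderivWithin (hS : UniqueDiffWithinAt ℝ S x)
    (hf : DifferentiableWithinAt ℝ (fderivWithin ℝ f S) S x) :
    lapWithin S f x = ∑ i, fderivWithin ℝ (fderivWithin ℝ f S) S x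
      (EuclideanSpace.single i 1) (EuclideanSpace.single i 1) := by
  refine Finset.sum_congr rfl fun i _ => ?_
  rw [fderivWithin_clm_apply hS hf (differentiableWithinAt_const _)]
  simp

lemma lapWithin_eq_laplacianWithin (hS : UniqueDiffOn ℝ S) (hf : ContDiffOn ℝ 2 f S)
    (hx : x ∈ S) : lapWithin S f x = InnerProductSpace.laplacianWithin f S x := by
  rw [lapWithin_eq_sum_second_fderivWithin (hS x hx)
      ((hf.fderivWithin hS one_add_one_eq_two.le).differentiableOn one_ne_zero x hx),
    InnerProductSpace.laplacianWithin_eq_iteratedFDerivWithin_orthonormalBasis f hS hx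
      (EuclideanSpace.basisFun (Fin n) ℝ)]
  simp [iteratedFDerivWithin_two_apply f hS hx]

lemma lapWithin_add (hS : UniqueDiffOn ℝ S) (hf : ContDiffOn ℝ 2 f S)
    (hg : ContDiffOn ℝ 2 g S) (hx : x ∈ S) :
    lapWithin S (f + g) x = lapWithin S f x + lapWithin S g x := by
  rw [lapWithin_eq_laplacianWithin (f := f + g) hS (hf.add hg) hx,
    lapWithin_eq_laplacianWithin hS hf hx, lapWithin_eq_laplacianWithin hS hg hx,
    (hf x hx).laplacianWithin_add (hg x hx) hS hx]

lemma lapWithin_const_smul (c : ℝ) (hS : UniqueDiffOn ℝ S) (hf : ContDiffOn ℝ 2 f S)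
    (hx : x ∈ S) : lapWithin S (c • f) x = c * lapWithin S f x := by
  rw [lapWithin_eq_laplacianWithin (f := c • f) hS (hf.const_smul c) hx,
    lapWithin_eq_laplacianWithin hS hf hx,
    InnerProductSpace.laplacianWithin_smul c (hf x hx) hS hx, smul_eq_mul]

end Laplacian

section NeumannCondition

variable {E : Type*} [NormedAddCommGroup E] [NormedSpace ℝ E] {R : ℝ} {f g : E → ℝ}

/-- The homogeneous Neumann condition `∂f/∂n = 0` on the boundary of the ball of radius `R` about
the origin, whose outward normal at `x` is `‖x‖⁻¹ • x`. As in the eigenvalue problems,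
the derivative is taken within the closed ball. -/
def IsNeumannBall (R : ℝ) (f : E → ℝ) : Prop :=
  ∀ x : E, ‖x‖ = R → fderivWithin ℝ f (closedBall 0 R) x (‖x‖⁻¹ • x) = 0

lemma IsNeumannBall.fderivWithin_apply_self (h : IsNeumannBall R f) {x : E}
    (hx : ‖x‖ = R) : fderivWithin ℝ f (closedBall 0 R) x x = 0 := by
  rcases eq_or_ne x 0 with rfl | hx0
  · exact map_zero _
  · simpa [hx0] using h x hx

lemma IsNeumannBall.congr (h : IsNeumannBall R f) (hgf : EqOn g f (closedBall 0 R)) :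
    IsNeumannBall R g := by
  intro x hx
  rw [fderivWithin_congr hgf (hgf (mem_closedBall_zero_iff.2 hx.le)), h x hx]

lemma IsNeumannBall.const_smul (c : ℝ) (h : IsNeumannBall R f) (hR : 0 < R) :
    IsNeumannBall R (c • f) := by
  intro x hx
  have hunique := uniqueDiffOn_closedBall 0 hR x (mem_closedBall_zero_iff.2 hx.le)
  rw [fderivWithin_const_smul_field c hunique, smul_apply, h x hx, smul_zero]

lemma IsNeumannBall.add (hf : IsNeumannBall R f) (hg : IsNeumannBall R g) (hR : 0 < R)
    (hdf : DifferentiableOn ℝ f (closedBall 0 R)) (hdg : DifferentiableOn ℝ g (closedBall 0 R)) :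
    IsNeumannBall R (f + g) := by
  intro x hx
  have hx_mem : x ∈ closedBall 0 R := mem_closedBall_zero_iff.2 hx.le
  rw [fderivWithin_add (uniqueDiffOn_closedBall 0 hR x hx_mem) (hdf x hx_mem) (hdg x hx_mem),
    add_apply, hf x hx, hg x hx, add_zero]

end NeumannCondition

section MaximumPrinciple

variable {n : ℕ} {R s : ℝ} {f : EuclideanSpace ℝ (Fin n) → ℝ}

lemma lapWithin_closedBall_nonpos_of_isMaxOn (hR : 0 < R)
    (hf : ContDiffOn ℝ 2 f (closedBall 0 R)) (hfN : IsNeumannBall R f)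
    {x : EuclideanSpace ℝ (Fin n)} (hx : x ∈ closedBall 0 R)
    (hmax : IsMaxOn f (closedBall 0 R) x) : lapWithin (closedBall 0 R) f x ≤ 0 := by
  have hS := uniqueDiffOn_closedBall (0 : EuclideanSpace ℝ (Fin n)) hR
  have hf' : DifferentiableWithinAt ℝ (fderivWithin ℝ f (closedBall 0 R)) (closedBall 0 R) x :=
    (hf.fderivWithin hS one_add_one_eq_two.le).differentiableOn one_ne_zero x hx
  rw [lapWithin_eq_sum_second_fderivWithin (hS x hx) hf']
  exact Finset.sum_nonpos fun i _ => second_fderiv_closedBall_apply_nonpos_of_isMaxOn hR hx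
    (fun y hy => (hf.differentiableOn two_ne_zero y hy).hasFDerivWithinAt)
    hf'.hasFDerivWithinAt hfN.fderivWithin_apply_self hmax _

lemma nonpos_of_mul_le_lapWithin (hR : 0 < R) (hs : 0 < s)
    (hf : ContDiffOn ℝ 2 f (closedBall 0 R)) (hfN : IsNeumannBall R f)
    (hsub : ∀ x ∈ closedBall 0 R, s * f x ≤ lapWithin (closedBall 0 R) f x) :
    ∀ x ∈ closedBall 0 R, f x ≤ 0 := by
  obtain ⟨z, hz, hmax⟩ := (isCompact_closedBall (0 : EuclideanSpace ℝ (Fin n)) R).exists_isMaxOn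
    (nonempty_closedBall.2 hR.le) hf.continuousOn
  have hz_nonpos : f z ≤ 0 := nonpos_of_mul_nonpos_right
    ((hsub z hz).trans (lapWithin_closedBall_nonpos_of_isMaxOn hR hf hfN hz hmax)) hs
  exact fun x hx => (hmax hx).trans hz_nonpos

lemma eqOn_zero_of_lapWithin_eq_smul (hR : 0 < R) (hs : 0 < s)
    (hf : ContDiffOn ℝ 2 f (closedBall 0 R)) (hfN : IsNeumannBall R f)
    (hΔ : EqOn (lapWithin (closedBall 0 R) f) (s • f) (closedBall 0 R)) :
    EqOn f 0 (closedBall 0 R) := by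
  intro x hx
  refine le_antisymm (nonpos_of_mul_le_lapWithin hR hs hf hfN (fun y hy => (hΔ hy).ge) x hx) ?_
  have hf_neg : ContDiffOn ℝ 2 ((-1 : ℝ) • f) (closedBall 0 R) := hf.const_smul (-1 : ℝ)
  have hsub_neg : ∀ y ∈ closedBall 0 R,
      s * ((-1 : ℝ) • f) y ≤ lapWithin (closedBall 0 R) ((-1 : ℝ) • f) y := by
    intro y hy
    rw [lapWithin_const_smul (-1) (uniqueDiffOn_closedBall 0 hR) hf hy, hΔ hy]
    simp
  simpa using nonpos_of_mul_le_lapWithin hR hs hf_neg (hfN.const_smul (-1) hR) hsub_neg x hx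

end MaximumPrinciple

section NeumannSpectrum

variable {n : ℕ} {R : ℝ} {u : EuclideanSpace ℝ (Fin n) → ℝ}

lemma lapWithin_eqOn_closedBall_of_eqOn_ball {c : ℝ} (hR : 0 < R)
    (hu : ContDiffOn ℝ 2 u (closedBall 0 R))
    (hΔ : EqOn (lapWithin (closedBall 0 R) u) (c • u) (ball 0 R)) :
    EqOn (lapWithin (closedBall 0 R) u) (c • u) (closedBall 0 R) :=
  eqOn_closedBall_of_eqOn_ball hR.ne'
    (contDiffOn_lapWithin (m := 0) (uniqueDiffOn_closedBall 0 hR) (by simpa using hu)).continuousOn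
    (hu.continuousOn.const_smul c) hΔ

lemma lapWithin_lapWithin_eqOn_of_lapWithin_eqOn_smul {S : Set (EuclideanSpace ℝ (Fin n))} {c : ℝ}
    (hS : UniqueDiffOn ℝ S) (hu : ContDiffOn ℝ 2 u S) (hΔ : EqOn (lapWithin S u) (c • u) S) :
    EqOn (lapWithin S (lapWithin S u)) (c ^ 2 • u) S := by
  intro x hx
  rw [lapWithin_congr hΔ hx, lapWithin_const_smul c hS hu hx, hΔ hx]
  simp only [Pi.smul_apply, smul_eq_mul]
  ring

lemma lapWithin_eq_neg_smul_of_lapWithin_lapWithin_eq {s : ℝ} (hR : 0 < R) (hs : 0 < s)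
    (hu : ContDiffOn ℝ 4 u (closedBall 0 R)) (huN : IsNeumannBall R u)
    (hΔuN : IsNeumannBall R (lapWithin (closedBall 0 R) u))
    (hΔΔ : EqOn (lapWithin (closedBall 0 R) (lapWithin (closedBall 0 R) u)) (s ^ 2 • u)
      (ball 0 R)) :
    EqOn (lapWithin (closedBall 0 R) u) (-s • u) (closedBall 0 R) := by
  have hS := uniqueDiffOn_closedBall (0 : EuclideanSpace ℝ (Fin n)) hR
  have hu₂ : ContDiffOn ℝ 2 u (closedBall 0 R) := hu.of_le (by norm_num)
  have hΔu : ContDiffOn ℝ 2 (lapWithin (closedBall 0 R) u) (closedBall 0 R) :=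
    contDiffOn_lapWithin hS (hu.of_le (by norm_num))
  have hsu : ContDiffOn ℝ 2 (s • u) (closedBall 0 R) := hu₂.const_smul s
  have hw : ContDiffOn ℝ 2 (lapWithin (closedBall 0 R) u + s • u) (closedBall 0 R) := hΔu.add hsu
  have hwN : IsNeumannBall R (lapWithin (closedBall 0 R) u + s • u) :=
    hΔuN.add (huN.const_smul s hR) hR (hΔu.differentiableOn two_ne_zero)
      (hsu.differentiableOn two_ne_zero)
  have hΔw : EqOn (lapWithin (closedBall 0 R) (lapWithin (closedBall 0 R) u + s • u))
      (s • (lapWithin (closedBall 0 R) u + s • u)) (ball 0 R) := by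
    intro x hx
    have hx' := ball_subset_closedBall hx
    rw [lapWithin_add hS hΔu hsu hx', lapWithin_const_smul s hS hu₂ hx', hΔΔ hx]
    simp only [Pi.smul_apply, Pi.add_apply, smul_eq_mul]
    ring
  intro x hx
  have hwx : lapWithin (closedBall 0 R) u x + s * u x = 0 :=
    eqOn_zero_of_lapWithin_eq_smul hR hs hw hwN
      (lapWithin_eqOn_closedBall_of_eqOn_ball hR hw hΔw) hx
  simp only [Pi.smul_apply, smul_eq_mul]
  linarith

lemma isBiLapNeumannEigenvalueBall_sq_iff {s : ℝ} (hR : 0 < R) (hs : 0 < s) :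
    IsBiLapNeumannEigenvalueBall n R (s ^ 2) ↔ IsLapNeumannEigenvalueBall n R s := by
  constructor
  · rintro ⟨v, hv, hv_ne, hΔΔv, hvN, hΔvN⟩
    refine ⟨v, hv, hv_ne, fun x hx => ?_, hvN⟩
    exact lapWithin_eq_neg_smul_of_lapWithin_lapWithin_eq hR hs
      (hv.of_le ENat.LEInfty.out) hvN hΔvN hΔΔv (ball_subset_closedBall hx)
  · rintro ⟨v, hv, hv_ne, hΔv, hvN⟩
    have hv₂ : ContDiffOn ℝ 2 v (closedBall 0 R) := hv.of_le ENat.LEInfty.out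
    have hΔv' := lapWithin_eqOn_closedBall_of_eqOn_ball hR hv₂ hΔv
    refine ⟨v, hv, hv_ne, fun x hx => ?_, hvN, (IsNeumannBall.const_smul (-s) hvN hR).congr hΔv'⟩
    simpa using lapWithin_lapWithin_eqOn_of_lapWithin_eqOn_smul (uniqueDiffOn_closedBall 0 hR)
      hv₂ hΔv' (ball_subset_closedBall hx)

lemma isLeast_biLapNeumannEigenvalueBall_sq {μ : ℝ} (hR : 0 < R)
    (hμ : IsLeast {μ : ℝ | 0 < μ ∧ IsLapNeumannEigenvalueBall n R μ} μ) :
    IsLeast {Υ : ℝ | 0 < Υ ∧ IsBiLapNeumannEigenvalueBall n R Υ} (μ ^ 2) := by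
  obtain ⟨⟨hμ_pos, hμ_eig⟩, hμ_min⟩ := hμ
  refine ⟨⟨pow_pos hμ_pos 2, (isBiLapNeumannEigenvalueBall_sq_iff hR hμ_pos).2 hμ_eig⟩, ?_⟩
  rintro Υ ⟨hΥ_pos, hΥ_eig⟩
  have hsqrt_pos : 0 < √Υ := Real.sqrt_pos.2 hΥ_pos
  rw [← Real.sq_sqrt hΥ_pos.le] at hΥ_eig
  exact (Real.le_sqrt' hμ_pos).1
    (hμ_min ⟨hsqrt_pos, (isBiLapNeumannEigenvalueBall_sq_iff hR hsqrt_pos).1 hΥ_eig⟩)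

end NeumannSpectrum

theorem first_lap_eigenfunction_is_biharmonic_eigenfunction_general {n : ℕ}
    (R : ℝ) (hR : 0 < R) (μ₁ Υ₁ : ℝ)
    (hμ : IsLeast {μ : ℝ | 0 < μ ∧ IsLapNeumannEigenvalueBall n R μ} μ₁)
    (hΥ : IsLeast {Υ : ℝ | 0 < Υ ∧ IsBiLapNeumannEigenvalueBall n R Υ} Υ₁)
    (u : EuclideanSpace ℝ (Fin n) → ℝ) (hu : ContDiffOn ℝ 2 u (closedBall 0 R))
    (hu_eig : ∀ x ∈ ball (0 : EuclideanSpace ℝ (Fin n)) R,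
      lapWithin (closedBall 0 R) u x = -μ₁ * u x)
    (hu_bd : ∀ x : EuclideanSpace ℝ (Fin n), ‖x‖ = R →
      fderivWithin ℝ u (closedBall 0 R) x (‖x‖⁻¹ • x) = 0) :
    (∀ x ∈ ball (0 : EuclideanSpace ℝ (Fin n)) R,
      lapWithin (closedBall 0 R) (lapWithin (closedBall 0 R) u) x = Υ₁ * u x) ∧
    (∀ x : EuclideanSpace ℝ (Fin n), ‖x‖ = R →
      fderivWithin ℝ u (closedBall 0 R) x (‖x‖⁻¹ • x) = 0) ∧
    (∀ x : EuclideanSpace ℝ (Fin n), ‖x‖ = R →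
      fderivWithin ℝ (lapWithin (closedBall 0 R) u) (closedBall 0 R) x (‖x‖⁻¹ • x) = 0) := by
  have hΥ_eq : Υ₁ = μ₁ ^ 2 := hΥ.unique (isLeast_biLapNeumannEigenvalueBall_sq hR hμ)
  have hΔu : EqOn (lapWithin (closedBall 0 R) u) (-μ₁ • u) (closedBall 0 R) :=
    lapWithin_eqOn_closedBall_of_eqOn_ball hR hu hu_eig
  have hΔΔu := lapWithin_lapWithin_eqOn_of_lapWithin_eqOn_smul (uniqueDiffOn_closedBall 0 hR) hu hΔu
  refine ⟨fun x hx => ?_, hu_bd, (IsNeumannBall.const_smul (-μ₁) hu_bd hR).congr hΔu⟩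
  simpa [hΥ_eq] using hΔΔu (ball_subset_closedBall hx)

/-- **First Neumann eigenfunctions of `Δ` on a ball are first Neumann eigenfunctions of `Δ²`.**
If `u` is a nonzero function, smooth on the closed ball `B_R(0) ⊂ ℝⁿ` (`n ≥ 2`, `R > 0`), with
`Δu = −μ₁(B_R(0))·u` in the ball and `∂u/∂n = 0` on the sphere, then `Δ²u = Υ₁(B_R(0))·u` in the
ball together with `∂u/∂n = ∂(Δu)/∂n = 0` on the sphere. -/
theorem first_lap_eigenfunction_is_biharmonic_eigenfunction {n : ℕ} (hn : 2 ≤ n)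
    (R : ℝ) (hR : 0 < R) (μ₁ Υ₁ : ℝ)
    (hμ : IsLeast {μ : ℝ | 0 < μ ∧ IsLapNeumannEigenvalueBall n R μ} μ₁)
    (hΥ : IsLeast {Υ : ℝ | 0 < Υ ∧ IsBiLapNeumannEigenvalueBall n R Υ} Υ₁)
    (u : EuclideanSpace ℝ (Fin n) → ℝ)
    (hu_smooth : ContDiffOn ℝ (⊤ : ℕ∞) u (closedBall 0 R))
    (hu_ne : ∃ x ∈ closedBall (0 : EuclideanSpace ℝ (Fin n)) R, u x ≠ 0)
    (hu_eig : ∀ x ∈ ball (0 : EuclideanSpace ℝ (Fin n)) R,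
      lapWithin (closedBall 0 R) u x = -μ₁ * u x)
    (hu_bd : ∀ x : EuclideanSpace ℝ (Fin n), ‖x‖ = R →
      fderivWithin ℝ u (closedBall 0 R) x (‖x‖⁻¹ • x) = 0) :
    (∀ x ∈ ball (0 : EuclideanSpace ℝ (Fin n)) R,
      lapWithin (closedBall 0 R) (lapWithin (closedBall 0 R) u) x = Υ₁ * u x) ∧
    (∀ x : EuclideanSpace ℝ (Fin n), ‖x‖ = R →
      fderivWithin ℝ u (closedBall 0 R) x (‖x‖⁻¹ • x) = 0) ∧
    (∀ x : EuclideanSpace ℝ (Fin n), ‖x‖ = R →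
      fderivWithin ℝ (lapWithin (closedBall 0 R) u) (closedBall 0 R) x (‖x‖⁻¹ • x) = 0) := by
  exact first_lap_eigenfunction_is_biharmonic_eigenfunction_general R hR μ₁ Υ₁ hμ hΥ u
    (hu_smooth.of_le ENat.LEInfty.out) hu_eig hu_bd
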